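/- A real number x is critical if and only if x is a rational number with x ≤ 0, or x = 1/n for some integer n ≥ 2, or x = n for some integer n ≥ 2. -/

import Mathlib

open Set

/-- `f` restricted to `{0,…,ℓ}` is a strictly increasing sequence from `0` to `n`. -/
def IsIncrSeq (n : ℤ) (ℓ : ℕ) (f : ℕ → ℤ) : Prop :=
  f 0 = 0 ∧ f ℓ = n ∧ ∀ m < ℓ, f m < f (m + 1)

/-- There is a path of the graph `G` from `a` to `b`: a finite strictly increasing
sequence of vertices from `a` to `b` all of whose consecutive pairs are edges of `G`. -/
def GReach (G : ℤ → ℤ → Prop) (a b : ℤ) : Prop :=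
  ∃ ℓ : ℕ, 1 ≤ ℓ ∧ ∃ f : ℕ → ℤ, f 0 = a ∧ f ℓ = b ∧
    ∀ m < ℓ, f m < f (m + 1) ∧ G (f m) (f (m + 1))

/-- `N_G(π)`: the number of consecutive pairs of the sequence that are edges of `G`. -/
noncomputable def nEdges (G : ℤ → ℤ → Prop) (ℓ : ℕ) (f : ℕ → ℤ) : ℕ :=
  {m : ℕ | m < ℓ ∧ G (f m) (f (m + 1))}.ncard

/-- `N̄_G(π)`: the number of consecutive pairs of the sequence that are *not* edges of `G`. -/
noncomputable def nNonEdges (G : ℤ → ℤ → Prop) (ℓ : ℕ) (f : ℕ → ℤ) : ℕ :=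
  {m : ℕ | m < ℓ ∧ ¬ G (f m) (f (m + 1))}.ncard

/-- The `x`-charge `N_G(π) + x·N̄_G(π)` of a sequence `π`. -/
noncomputable def chargeOf (x : ℝ) (G : ℤ → ℤ → Prop) (ℓ : ℕ) (f : ℕ → ℤ) : ℝ :=
  (nEdges G ℓ f : ℝ) + x * (nNonEdges G ℓ f : ℝ)

/-- A real number `x` is critical: for some `n ≥ 1` there are a graph `G ∈ ℌ_n` and two
maximal-`x`-charge increasing sequences from `0` to `n` with different numbers of
non-edges. -/
def Critical (x : ℝ) : Prop :=
  ∃ n : ℕ, 1 ≤ n ∧ ∃ G : ℤ → ℤ → Prop,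
    -- G is a directed graph on {0,…,n} whose edges (i,j) satisfy i < j
    (∀ i j : ℤ, G i j → 0 ≤ i ∧ i < j ∧ j ≤ (n : ℤ)) ∧
    -- G ∈ ℌ_n :
    (∀ j : ℤ, 0 < j → j < (n : ℤ) →
      -- (a) there is a path of G from 0 to n containing j
      (∃ ℓ : ℕ, 1 ≤ ℓ ∧ ∃ f : ℕ → ℤ, f 0 = 0 ∧ f ℓ = (n : ℤ) ∧
        (∀ m < ℓ, f m < f (m + 1) ∧ G (f m) (f (m + 1))) ∧ ∃ m ≤ ℓ, f m = j) ∧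
      -- (b) some 0 < i < n, i ≠ j, is not linked to j by a path of G
      (∃ i : ℤ, 0 < i ∧ i < (n : ℤ) ∧ i ≠ j ∧ ¬ GReach G (min i j) (max i j))) ∧
    -- two maximizers of the x-charge with different numbers of non-edges
    ∃ (ℓ₁ : ℕ) (f₁ : ℕ → ℤ) (ℓ₂ : ℕ) (f₂ : ℕ → ℤ),
      IsIncrSeq (n : ℤ) ℓ₁ f₁ ∧ IsIncrSeq (n : ℤ) ℓ₂ f₂ ∧
      chargeOf x G ℓ₁ f₁ = chargeOf x G ℓ₂ f₂ ∧
      (∀ (ℓ : ℕ) (f : ℕ → ℤ), IsIncrSeq (n : ℤ) ℓ f →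
        chargeOf x G ℓ f ≤ chargeOf x G ℓ₁ f₁) ∧
      nNonEdges G ℓ₁ f₁ ≠ nNonEdges G ℓ₂ f₂

/-!
Only the pair (number of edges, number of non-edges) of a sequence matters, and an end segment of a
sequence of maximal charge has maximal charge itself.

*Necessity.* Two maximizers with different numbers of non-edges make `x` rational. If `x ≥ 1`,
inserting a vertex between the ends of the first step of a maximizer shows that a first edge cannot
be refined at all, and that a first non-edge can only be refined by two edges, which costs `2 ≤ x`.
An induction on the total length then compares two maximizers: unless `x` is an integer at least
`2`, they contain equally many non-edges. Exchanging edges and non-edges turns `0 < x ≤ 1` into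
`x⁻¹ ≥ 1`.

*Sufficiency.* A potential that rises by at least `α` along every edge and at least `β` along every
non-edge bounds `α * N_G + β * N̄_G`, so sequences for which the bound is attained are maximizers
for `x = β / α`. The three families of `x` come from explicit finite linear orders carrying such a
potential, to which a first and a last vertex, adjacent to everything, are added.
-/

/-- `IncrPath G a b e f`: there is a strictly increasing sequence from `a` to `b` with exactly `e`
consecutive pairs that are edges of `G` and exactly `f` that are not. -/
inductive IncrPath {V : Type*} [LT V] (G : V → V → Prop) : V → V → ℕ → ℕ → Prop
  | nil (a : V) : IncrPath G a a 0 0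
  | edge {a b c : V} {e f : ℕ} (hab : a < b) (hG : G a b) (p : IncrPath G b c e f) :
      IncrPath G a c (e + 1) f
  | nonEdge {a b c : V} {e f : ℕ} (hab : a < b) (hG : ¬ G a b) (p : IncrPath G b c e f) :
      IncrPath G a c e (f + 1)

/-- Among the increasing sequences from `a` to `b`, those with `e` edges and `f` non-edges exist and
have maximal `x`-charge. -/
def IsOptimal {V : Type*} [LT V] (x : ℝ) (G : V → V → Prop) (a b : V) (e f : ℕ) : Prop :=
  IncrPath G a b e f ∧ ∀ e' f' : ℕ, IncrPath G a b e' f' → (e' : ℝ) + x * f' ≤ e + x * f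

namespace IncrPath

section LT

variable {V : Type*} [LT V] {G : V → V → Prop} {a b c : V} {e f e' f' : ℕ}

open scoped Classical in
lemma cons (hab : a < b) (p : IncrPath G b c e f) :
    IncrPath G a c (e + if G a b then 1 else 0) (f + if G a b then 0 else 1) := by
  by_cases hG : G a b
  · simpa [hG] using edge hab hG p
  · simpa [hG] using nonEdge hab hG p

lemma trans (p : IncrPath G a b e f) (p' : IncrPath G b c e' f') :
    IncrPath G a c (e + e') (f + f') := by
  induction p with
  | nil => simpa only [zero_add] using p'
  | edge hab hG _ ih => simpa only [add_right_comm] using edge hab hG (ih p')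
  | nonEdge hab hG _ ih => simpa only [add_right_comm] using nonEdge hab hG (ih p')

lemma compl (p : IncrPath G a b e f) : IncrPath Gᶜ a b f e := by
  induction p with
  | nil a => exact nil a
  | edge hab hG _ ih => exact nonEdge hab (not_not_intro hG) ih
  | nonEdge hab hG _ ih => exact edge hab hG ih

lemma of_forall_edge {g : ℕ → V} {m : ℕ}
    (hg : ∀ i < m, g i < g (i + 1) ∧ G (g i) (g (i + 1))) : IncrPath G (g 0) (g m) m 0 := by
  induction m with
  | zero => exact nil _
  | succ m ih =>
    exact (ih fun i hi => hg i (hi.trans m.lt_succ_self)).trans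
      (edge (hg m m.lt_succ_self).1 (hg m m.lt_succ_self).2 (nil _))

lemma of_forall_nonEdge {g : ℕ → V} {m : ℕ}
    (hg : ∀ i < m, g i < g (i + 1) ∧ ¬ G (g i) (g (i + 1))) : IncrPath G (g 0) (g m) 0 m := by
  simpa only [compl_compl] using (of_forall_edge (G := Gᶜ) hg).compl

lemma map {W : Type*} [LT W] {G' : W → W → Prop} {φ : V → W} (hφ : ∀ u v, u < v → φ u < φ v)
    (hG : ∀ u v, u < v → (G' (φ u) (φ v) ↔ G u v)) (p : IncrPath G a b e f) :
    IncrPath G' (φ a) (φ b) e f := by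
  induction p with
  | nil => exact nil _
  | edge hab h _ ih => exact edge (hφ _ _ hab) ((hG _ _ hab).2 h) ih
  | nonEdge hab h _ ih => exact nonEdge (hφ _ _ hab) (mt (hG _ _ hab).1 h) ih

end LT

lemma le {V : Type*} [Preorder V] {G : V → V → Prop} {a b : V} {e f : ℕ}
    (p : IncrPath G a b e f) : a ≤ b := by
  induction p with
  | nil => exact le_rfl
  | edge hab _ _ ih => exact hab.le.trans ih
  | nonEdge hab _ _ ih => exact hab.le.trans ih

end IncrPath

section Sequences

lemma ncard_lt_and_eq_count (P : ℕ → Prop) [DecidablePred P] (ℓ : ℕ) :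
    {m : ℕ | m < ℓ ∧ P m}.ncard = Nat.count P ℓ := by
  rw [Nat.count_eq_card_filter_range, ← Set.ncard_coe_finset]
  simp

variable (G : ℤ → ℤ → Prop) (ℓ : ℕ) (g : ℕ → ℤ)

open scoped Classical in
lemma nEdges_succ :
    nEdges G (ℓ + 1) g = nEdges G ℓ (fun m => g (m + 1)) + if G (g 0) (g 1) then 1 else 0 := by
  simp only [nEdges, ncard_lt_and_eq_count, Nat.count_succ']

open scoped Classical in
lemma nNonEdges_succ :
    nNonEdges G (ℓ + 1) g =
      nNonEdges G ℓ (fun m => g (m + 1)) + if G (g 0) (g 1) then 0 else 1 := by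
  simp only [nNonEdges, ncard_lt_and_eq_count, Nat.count_succ', ite_not]

variable {ℓ g}

lemma incrPath_of_forall_lt (hg : ∀ m < ℓ, g m < g (m + 1)) :
    IncrPath G (g 0) (g ℓ) (nEdges G ℓ g) (nNonEdges G ℓ g) := by
  induction ℓ generalizing g with
  | zero => simpa [nEdges, nNonEdges] using IncrPath.nil (g 0)
  | succ ℓ ih =>
    rw [nEdges_succ, nNonEdges_succ]
    exact (ih fun m hm => hg (m + 1) (by omega)).cons (hg 0 ℓ.succ_pos)

variable {G}

lemma IncrPath.exists_seq {a b : ℤ} {e f : ℕ} (p : IncrPath G a b e f) :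
    ∃ (ℓ : ℕ) (g : ℕ → ℤ), (g 0 = a ∧ g ℓ = b ∧ ∀ m < ℓ, g m < g (m + 1)) ∧
      nEdges G ℓ g = e ∧ nNonEdges G ℓ g = f := by
  induction p with
  | nil a => exact ⟨0, fun _ => a, by simp, by simp [nEdges], by simp [nNonEdges]⟩
  | @edge a _ _ _ _ hab hG _ ih | @nonEdge a _ _ _ _ hab hG _ ih =>
    obtain ⟨ℓ, g, ⟨rfl, hend, hlt⟩, rfl, rfl⟩ := ih
    refine ⟨ℓ + 1, fun m => m.casesOn a g, ⟨rfl, hend, ?_⟩, ?_, ?_⟩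
    · rintro (_ | m) hm
      · exact hab
      · exact hlt m (by omega)
    · simp [nEdges_succ, hG]
    · simp [nNonEdges_succ, hG]

lemma IsIncrSeq.isOptimal_iff {x : ℝ} {n : ℤ} (hg : IsIncrSeq n ℓ g) :
    IsOptimal x G 0 n (nEdges G ℓ g) (nNonEdges G ℓ g) ↔
      ∀ (ℓ' : ℕ) (g' : ℕ → ℤ), IsIncrSeq n ℓ' g' → chargeOf x G ℓ' g' ≤ chargeOf x G ℓ g := by
  have path_of {ℓ' : ℕ} {g' : ℕ → ℤ} (hg' : IsIncrSeq n ℓ' g') :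
      IncrPath G 0 n (nEdges G ℓ' g') (nNonEdges G ℓ' g') := by
    simpa only [hg'.1, hg'.2.1] using incrPath_of_forall_lt G hg'.2.2
  refine ⟨fun h ℓ' g' hg' => h.2 _ _ (path_of hg'), fun h => ⟨path_of hg, fun e' f' p => ?_⟩⟩
  obtain ⟨ℓ', g', hg', rfl, rfl⟩ := p.exists_seq
  exact h ℓ' g' hg'

lemma exists_maximizers_iff {x : ℝ} {n : ℤ} :
    (∃ (ℓ₁ : ℕ) (g₁ : ℕ → ℤ) (ℓ₂ : ℕ) (g₂ : ℕ → ℤ), IsIncrSeq n ℓ₁ g₁ ∧ IsIncrSeq n ℓ₂ g₂ ∧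
      chargeOf x G ℓ₁ g₁ = chargeOf x G ℓ₂ g₂ ∧
      (∀ (ℓ : ℕ) (g : ℕ → ℤ), IsIncrSeq n ℓ g → chargeOf x G ℓ g ≤ chargeOf x G ℓ₁ g₁) ∧
      nNonEdges G ℓ₁ g₁ ≠ nNonEdges G ℓ₂ g₂) ↔
    ∃ e₁ f₁ e₂ f₂ : ℕ, IsOptimal x G 0 n e₁ f₁ ∧ IsOptimal x G 0 n e₂ f₂ ∧ f₁ ≠ f₂ := by
  constructor
  · rintro ⟨ℓ₁, g₁, ℓ₂, g₂, hg₁, hg₂, heq, hmax, hne⟩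
    exact ⟨_, _, _, _, hg₁.isOptimal_iff.2 hmax, hg₂.isOptimal_iff.2 (heq ▸ hmax), hne⟩
  · rintro ⟨_, _, _, _, h₁, h₂, hne⟩
    obtain ⟨ℓ₁, g₁, hg₁, rfl, rfl⟩ := h₁.1.exists_seq
    obtain ⟨ℓ₂, g₂, hg₂, rfl, rfl⟩ := h₂.1.exists_seq
    exact ⟨ℓ₁, g₁, ℓ₂, g₂, hg₁, hg₂, (h₂.2 _ _ h₁.1).antisymm (h₁.2 _ _ h₂.1),
      IsIncrSeq.isOptimal_iff hg₁ |>.1 h₁, hne⟩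

end Sequences

section Necessity

namespace IsOptimal

variable {V : Type*} {x : ℝ} {e f e₁ f₁ e₂ f₂ : ℕ}

section LT

variable [LT V] {G : V → V → Prop} {a b c : V}

lemma of_edge (h : IsOptimal x G a c (e + 1) f) (hab : a < b) (hG : G a b)
    (p : IncrPath G b c e f) : IsOptimal x G b c e f := by
  refine ⟨p, fun e' f' p' => ?_⟩
  have := h.2 _ _ (p'.edge hab hG)
  push_cast at this
  linarith

lemma of_nonEdge (h : IsOptimal x G a c e (f + 1)) (hab : a < b) (hG : ¬ G a b)
    (p : IncrPath G b c e f) : IsOptimal x G b c e f := by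
  refine ⟨p, fun e' f' p' => ?_⟩
  have := h.2 _ _ (p'.nonEdge hab hG)
  push_cast at this
  linarith

lemma charge_eq (h₁ : IsOptimal x G a b e₁ f₁) (h₂ : IsOptimal x G a b e₂ f₂) :
    (e₁ : ℝ) + x * f₁ = e₂ + x * f₂ :=
  (h₂.2 _ _ h₁.1).antisymm (h₁.2 _ _ h₂.1)

lemma compl (hx : 0 < x) (h : IsOptimal x G a b e f) : IsOptimal x⁻¹ Gᶜ a b f e := by
  have rescale (e f : ℕ) : (f : ℝ) + x⁻¹ * e = x⁻¹ * (e + x * f) := by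
    field_simp
    ring
  refine ⟨h.1.compl, fun f' e' p => ?_⟩
  have hle := h.2 e' f' (by simpa only [compl_compl] using p.compl)
  rw [rescale, rescale]
  gcongr

end LT

section LinearOrder

variable [LinearOrder V] {G : V → V → Prop} {a b c u v n : V}

lemma not_lt_of_edge (hx : 1 ≤ x) (h : IsOptimal x G a c (e + 1) f) (p : IncrPath G b c e f)
    (hau : a < u) : ¬ u < b := by
  classical
  intro hub
  have := h.2 _ _ ((p.cons hub).cons hau)
  split_ifs at this <;> push_cast at this <;> linarith

lemma edge_and_edge_of_nonEdge (hx : 1 ≤ x) (h : IsOptimal x G a c e (f + 1))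
    (p : IncrPath G b c e f) (hau : a < u) (hub : u < b) : G a u ∧ G u b ∧ 2 ≤ x := by
  classical
  have := h.2 _ _ ((p.cons hub).cons hau)
  split_ifs at this with hub' hau' <;> push_cast at this
  · exact ⟨hau', hub', by linarith⟩
  all_goals linarith

lemma eq_of_edge_of_edge (hx : 1 ≤ x) (hab : a < b) (p : IncrPath G b n e₁ f₁)
    (hac : a < c) (p' : IncrPath G c n e₂ f₂) (h₁ : IsOptimal x G a n (e₁ + 1) f₁)
    (h₂ : IsOptimal x G a n (e₂ + 1) f₂) : b = c :=
  le_antisymm (not_lt.1 (h₁.not_lt_of_edge hx p hac)) (not_lt.1 (h₂.not_lt_of_edge hx p' hab))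

lemma eq_of_nonEdge_of_nonEdge (hx : 1 ≤ x) (hab : a < b) (hG : ¬ G a b)
    (p : IncrPath G b n e₁ f₁) (hac : a < c) (hG' : ¬ G a c) (p' : IncrPath G c n e₂ f₂)
    (h₁ : IsOptimal x G a n e₁ (f₁ + 1)) (h₂ : IsOptimal x G a n e₂ (f₂ + 1)) : b = c := by
  rcases lt_trichotomy b c with hbc | heq | hcb
  · exact absurd (h₂.edge_and_edge_of_nonEdge hx p' hab hbc).1 hG
  · exact heq
  · exact absurd (h₁.edge_and_edge_of_nonEdge hx p hac hcb).1 hG'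

lemma nonEdges_eq_or_eq_succ_of_lt_lt (hx : 1 ≤ x) {N : ℕ}
    (unique : ∀ (v : V) (e₁ f₁ e₂ f₂ : ℕ), e₁ + f₁ + (e₂ + f₂) < N →
      IsOptimal x G v n e₁ f₁ → IsOptimal x G v n e₂ f₂ → f₁ = f₂)
    (hN : e₁ + f₁ + (e₂ + f₂) ≤ N) (hvu : v < u) (huc : u < c) (hvc : ¬ G v c)
    (hu : IsOptimal x G u n e₁ f₁) (pc : IncrPath G c n e₂ f₂)
    (hv : IsOptimal x G v n e₂ (f₂ + 1)) : f₁ = f₂ ∨ f₁ = f₂ + 1 := by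
  induction hM : e₁ + f₁ + (e₂ + f₂) using Nat.strong_induction_on
    generalizing u c v e₁ f₁ e₂ f₂ with
  | _ M ih =>
  subst hM
  obtain ⟨hvu', huc', -⟩ := hv.edge_and_edge_of_nonEdge hx pc hvu huc
  have hc := hv.of_nonEdge (hvu.trans huc) hvc pc
  have pu := hu.1
  cases pu with
  | nil => exact absurd pc.le huc.not_ge
  | @edge _ b _ e _ hub hG p =>
    have hb := hu.of_edge hub hG p
    rcases lt_trichotomy b c with hbc | rfl | hcb
    · exact ih _ (by omega) (by omega) (hvu.trans hub) hbc hvc hb pc hv rfl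
    · exact .inl (unique b _ _ _ _ (by omega) hb hc)
    · exact absurd hcb (hu.not_lt_of_edge hx p huc)
  | @nonEdge _ b _ _ f hub hG p =>
    rcases lt_trichotomy b c with hbc | rfl | hcb
    · -- Replacing the first step `v → c` by `v → u → b → c` would gain two edges.
      have hbc' := (hv.edge_and_edge_of_nonEdge hx pc (hvu.trans hub) hbc).2.1
      have := hv.2 _ _ (((pc.edge hbc hbc').nonEdge hub hG).edge hvu hvu')
      push_cast at this
      linarith
    · exact absurd huc' hG
    · -- The roles are exchanged: `c` lies inside the first step `u → b` of the other sequence.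
      have := ih _ (by omega) (by omega) huc hcb hG hc p hu rfl
      omega

lemma nonEdges_eq_of_edge_of_nonEdge (hx : 1 ≤ x) (hx' : ∀ k : ℕ, 2 ≤ k → x ≠ k)
    (unique : ∀ (v : V) (e₁' f₁' e₂' f₂' : ℕ),
      e₁' + f₁' + (e₂' + f₂') < e₁ + 1 + f₁ + (e₂ + (f₂ + 1)) →
      IsOptimal x G v n e₁' f₁' → IsOptimal x G v n e₂' f₂' → f₁' = f₂')
    (hab : a < b) (hG : G a b) (p : IncrPath G b n e₁ f₁)
    (hac : a < c) (hG' : ¬ G a c) (p' : IncrPath G c n e₂ f₂)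
    (h : IsOptimal x G a n (e₁ + 1) f₁) (h' : IsOptimal x G a n e₂ (f₂ + 1)) :
    f₁ = f₂ + 1 := by
  have hbc : b < c := by
    refine lt_of_le_of_ne (not_lt.1 (h.not_lt_of_edge hx p hac)) ?_
    rintro rfl
    exact hG' hG
  refine (nonEdges_eq_or_eq_succ_of_lt_lt hx unique (by omega) hab hbc hG'
    (h.of_edge hab hG p) p' h').resolve_left ?_
  rintro rfl
  have hx2 := (h'.edge_and_edge_of_nonEdge hx p' hab hbc).2.2
  have hcharge := h.charge_eq h'
  push_cast at hcharge
  have hxe : x + e₂ = (e₁ + 1 : ℕ) := by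
    push_cast
    linarith
  have hle : e₂ + 2 ≤ e₁ + 1 := by
    have : ((e₂ + 2 : ℕ) : ℝ) ≤ (e₁ + 1 : ℕ) := by
      push_cast at hxe ⊢
      linarith
    exact_mod_cast this
  refine hx' (e₁ + 1 - e₂) (by omega) ?_
  rw [Nat.cast_sub (by omega)]
  linarith

theorem nonEdges_unique (hx : 1 ≤ x) (hx' : ∀ k : ℕ, 2 ≤ k → x ≠ k)
    (h₁ : IsOptimal x G v n e₁ f₁) (h₂ : IsOptimal x G v n e₂ f₂) : f₁ = f₂ := by
  induction hN : e₁ + f₁ + (e₂ + f₂) using Nat.strong_induction_on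
    generalizing v e₁ f₁ e₂ f₂ with
  | _ N ih =>
  subst hN
  have unique (v : V) (e₁' f₁' e₂' f₂' : ℕ) (hlt : e₁' + f₁' + (e₂' + f₂') < _)
      (h₁' : IsOptimal x G v n e₁' f₁') (h₂' : IsOptimal x G v n e₂' f₂') : f₁' = f₂' :=
    ih _ hlt h₁' h₂' rfl
  have p₁ := h₁.1
  have p₂ := h₂.1
  cases p₁ with
  | nil =>
    cases p₂ with
    | nil => rfl
    | edge hb _ p => exact absurd p.le hb.not_ge
    | nonEdge hb _ p => exact absurd p.le hb.not_ge
  | @edge _ b _ e _ hb hG p =>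
    cases p₂ with
    | nil => exact absurd p.le hb.not_ge
    | @edge _ b' _ e' _ hb' hG' p' =>
      obtain rfl := eq_of_edge_of_edge hx hb p hb' p' h₁ h₂
      exact unique b _ _ _ _ (by omega) (h₁.of_edge hb hG p) (h₂.of_edge hb' hG' p')
    | nonEdge hb' hG' p' =>
      exact nonEdges_eq_of_edge_of_nonEdge hx hx' unique hb hG p hb' hG' p' h₁ h₂
  | @nonEdge _ b _ _ f hb hG p =>
    cases p₂ with
    | nil => exact absurd p.le hb.not_ge
    | edge hb' hG' p' =>
      exact (nonEdges_eq_of_edge_of_nonEdge hx hx'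
        (fun v _ _ _ _ hlt => unique v _ _ _ _ (by omega)) hb' hG' p' hb hG p h₂ h₁).symm
    | @nonEdge _ b' _ _ f' hb' hG' p' =>
      obtain rfl := eq_of_nonEdge_of_nonEdge hx hb hG p hb' hG' p' h₁ h₂
      exact congrArg (· + 1)
        (unique b _ _ _ _ (by omega) (h₁.of_nonEdge hb hG p) (h₂.of_nonEdge hb' hG' p'))

lemma exists_nat_eq (hx : 1 ≤ x) (h₁ : IsOptimal x G a b e₁ f₁) (h₂ : IsOptimal x G a b e₂ f₂)
    (hne : f₁ ≠ f₂) : ∃ k : ℕ, 2 ≤ k ∧ x = k := by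
  contrapose! hne
  exact h₁.nonEdges_unique hx hne h₂

lemma exists_nat_eq_one_div (hx₀ : 0 < x) (hx₁ : x ≤ 1) (h₁ : IsOptimal x G a b e₁ f₁)
    (h₂ : IsOptimal x G a b e₂ f₂) (hne : f₁ ≠ f₂) : ∃ k : ℕ, 2 ≤ k ∧ x = 1 / k := by
  have hne' : e₁ ≠ e₂ := by
    rintro rfl
    have := h₁.charge_eq h₂
    exact hne (by simpa [hx₀.ne'] using this)
  obtain ⟨k, hk, hxk⟩ := exists_nat_eq ((one_le_inv₀ hx₀).2 hx₁) (h₁.compl hx₀) (h₂.compl hx₀) hne'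
  exact ⟨k, hk, by rw [← hxk, one_div, inv_inv]⟩

end LinearOrder

lemma exists_rat_eq [LT V] {G : V → V → Prop} {a b : V} (h₁ : IsOptimal x G a b e₁ f₁)
    (h₂ : IsOptimal x G a b e₂ f₂) (hne : f₁ ≠ f₂) : ∃ q : ℚ, x = q := by
  refine ⟨((e₂ : ℚ) - e₁) / (f₁ - f₂), ?_⟩
  have hne' : (f₁ : ℝ) - f₂ ≠ 0 := sub_ne_zero.2 (Nat.cast_injective.ne hne)
  push_cast
  rw [eq_div_iff hne']
  linarith [h₁.charge_eq h₂]

end IsOptimal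

theorem eq_rat_or_one_div_or_nat_of_critical {x : ℝ} (hx : Critical x) :
    (∃ q : ℚ, q ≤ 0 ∧ x = (q : ℝ)) ∨ (∃ n : ℕ, 2 ≤ n ∧ x = 1 / (n : ℝ)) ∨
      (∃ n : ℕ, 2 ≤ n ∧ x = (n : ℝ)) := by
  obtain ⟨n, -, G, -, -, hmax⟩ := hx
  obtain ⟨e₁, f₁, e₂, f₂, h₁, h₂, hne⟩ := exists_maximizers_iff.1 hmax
  rcases le_or_gt x 0 with hx₀ | hx₀
  · obtain ⟨q, rfl⟩ := h₁.exists_rat_eq h₂ hne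
    exact .inl ⟨q, by exact_mod_cast hx₀, rfl⟩
  rcases le_total x 1 with hx₁ | hx₁
  · exact .inr (.inl (h₁.exists_nat_eq_one_div hx₀ hx₁ h₂ hne))
  · exact .inr (.inr (h₁.exists_nat_eq hx₁ h₂ hne))

end Necessity

section Potential

/-- `h` is a potential on `s`: it rises by at least `α` along the edges of `G` inside `s`, and by at
least `β` along the increasing pairs of elements of `s` that are not edges. -/
structure IsPotentialOn {V : Type*} [LT V] (G : V → V → Prop) (α β : ℤ) (h : V → ℤ)
    (s : Set V) : Prop where
  edge : ∀ u ∈ s, ∀ v ∈ s, u < v → G u v → h u + α ≤ h v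
  nonEdge : ∀ u ∈ s, ∀ v ∈ s, u < v → ¬ G u v → h u + β ≤ h v

lemma IsPotentialOn.mono {V : Type*} [LT V] {G : V → V → Prop} {α β : ℤ} {h : V → ℤ}
    {s t : Set V} (hst : s ⊆ t) (hh : IsPotentialOn G α β h t) : IsPotentialOn G α β h s :=
  ⟨fun u hu v hv => hh.edge u (hst hu) v (hst hv),
    fun u hu v hv => hh.nonEdge u (hst hu) v (hst hv)⟩

variable {V : Type*} [Preorder V] {G : V → V → Prop} {α β : ℤ} {h : V → ℤ} {a b : V} {e f : ℕ}

lemma IsPotentialOn.weight_le (hh : IsPotentialOn G α β h (Icc a b)) (p : IncrPath G a b e f) :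
    α * e + β * f ≤ h b - h a := by
  induction p with
  | nil => simp
  | edge hac hG p ih =>
    have hrest := ih (hh.mono (Icc_subset_Icc_left hac.le))
    have hstep := hh.edge _ ⟨le_rfl, hac.le.trans p.le⟩ _ ⟨hac.le, p.le⟩ hac hG
    push_cast
    linarith
  | nonEdge hac hG p ih =>
    have hrest := ih (hh.mono (Icc_subset_Icc_left hac.le))
    have hstep := hh.nonEdge _ ⟨le_rfl, hac.le.trans p.le⟩ _ ⟨hac.le, p.le⟩ hac hG
    push_cast
    linarith

lemma IsPotentialOn.isOptimal (hh : IsPotentialOn G α β h (Icc a b)) (hα : 0 < α)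
    (p : IncrPath G a b e f) (htight : α * e + β * f = h b - h a) :
    IsOptimal (β / α) G a b e f := by
  have hα' : (α : ℝ) ≠ 0 := by exact_mod_cast hα.ne'
  have charge (e f : ℕ) : (e : ℝ) + β / α * f = ((α * e + β * f : ℤ) : ℝ) / α := by
    push_cast
    field_simp [hα']
  refine ⟨p, fun e' f' p' => ?_⟩
  rw [charge, charge, htight]
  exact div_le_div_of_nonneg_right (by exact_mod_cast hh.weight_le p') (by exact_mod_cast hα.le)

end Potential

section DoubleCone

variable {V : Type*} [Fintype V] [LinearOrder V]

/-- The place, counted from `1`, of `v` in the increasing enumeration of `V`. -/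
noncomputable def place (v : V) : ℤ :=
  ((Fintype.orderIsoFinOfCardEq V rfl).symm v : ℕ) + 1

/-- The graph on `{0, …, |V| + 1}` obtained from the graph `E` on `V` by placing `V` at
`1, …, |V|` and joining both `0` and `|V| + 1` to all other vertices. -/
def doubleCone (E : V → V → Prop) : ℤ → ℤ → Prop := fun s t =>
  0 ≤ s ∧ s < t ∧ t ≤ (Fintype.card V + 1 : ℕ) ∧
    (s = 0 ∨ t = (Fintype.card V + 1 : ℕ) ∨ ∃ u v : V, place u = s ∧ place v = t ∧ E u v)

/-- The extension of a function on `V` to the vertices of a double cone, with the values `lo` at `0`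
and `hi` at `|V| + 1`. -/
noncomputable def coneExtend (h : V → ℤ) (lo hi : ℤ) : ℤ → ℤ :=
  Function.extend place h fun t => if t ≤ 0 then lo else hi

lemma place_strictMono : StrictMono (place : V → ℤ) := fun u v huv => by
  have := (Fintype.orderIsoFinOfCardEq V rfl).symm.strictMono huv
  simpa [place] using this

lemma place_pos (v : V) : 0 < place v := by
  unfold place
  omega

lemma place_lt (v : V) : place v < (Fintype.card V + 1 : ℕ) := by
  unfold place
  omega

lemma exists_place_eq {t : ℤ} (h0 : 0 < t) (hn : t < (Fintype.card V + 1 : ℕ)) :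
    ∃ v : V, place v = t :=
  ⟨Fintype.orderIsoFinOfCardEq V rfl ⟨(t - 1).toNat, by omega⟩, by
    simp only [place, OrderIso.symm_apply_apply]
    omega⟩

lemma eq_zero_or_eq_card_add_one_or_exists_place {t : ℤ}
    (ht : t ∈ Icc (0 : ℤ) (Fintype.card V + 1 : ℕ)) :
    t = 0 ∨ t = (Fintype.card V + 1 : ℕ) ∨ ∃ v : V, place v = t := by
  rcases ht.1.eq_or_lt with h0 | h0
  · exact .inl h0.symm
  rcases ht.2.eq_or_lt with hn | hn
  · exact .inr (.inl hn)
  · exact .inr (.inr (exists_place_eq h0 hn))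

variable {E : V → V → Prop} {α β : ℤ} {h : V → ℤ} {lo hi : ℤ} {u v a b : V}

lemma doubleCone_place_iff (huv : u < v) : doubleCone E (place u) (place v) ↔ E u v := by
  constructor
  · rintro ⟨-, -, -, h | h | ⟨u', v', hu, hv, hE⟩⟩
    · exact absurd h (place_pos u).ne'
    · exact absurd h (place_lt v).ne
    · rwa [← place_strictMono.injective hu, ← place_strictMono.injective hv]
  · exact fun hE => ⟨(place_pos u).le, place_strictMono huv, (place_lt v).le,
      .inr (.inr ⟨u, v, rfl, rfl, hE⟩)⟩

lemma doubleCone_zero {t : ℤ} (h0 : 0 < t) (hn : t ≤ (Fintype.card V + 1 : ℕ)) :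
    doubleCone E 0 t :=
  ⟨le_rfl, h0, hn, .inl rfl⟩

lemma doubleCone_card_add_one {s : ℤ} (h0 : 0 ≤ s) (hn : s < (Fintype.card V + 1 : ℕ)) :
    doubleCone E s (Fintype.card V + 1 : ℕ) :=
  ⟨h0, hn, le_rfl, .inr (.inl rfl)⟩

lemma coneExtend_place : coneExtend h lo hi (place v) = h v :=
  place_strictMono.injective.extend_apply _ _ v

lemma coneExtend_zero : coneExtend h lo hi 0 = lo := by
  rw [coneExtend, Function.extend_apply' _ _ _ fun ⟨v, hv⟩ => (place_pos v).ne' hv]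
  simp

lemma coneExtend_card_add_one : coneExtend h lo hi (Fintype.card V + 1 : ℕ) = hi := by
  rw [coneExtend, Function.extend_apply' _ _ _ fun ⟨v, hv⟩ => (place_lt v).ne hv]
  exact if_neg (by omega)

lemma IncrPath.doubleCone {e f : ℕ} (p : IncrPath E a b e f) :
    IncrPath (doubleCone E) 0 (Fintype.card V + 1 : ℕ) (e + 2) f := by
  have hlast : IncrPath (_root_.doubleCone E) (place b) (Fintype.card V + 1 : ℕ) 1 0 :=
    .edge (place_lt b) (doubleCone_card_add_one (place_pos b).le (place_lt b)) (.nil _)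
  have hinner : IncrPath (_root_.doubleCone E) (place a) (place b) e f :=
    p.map (fun _ _ huv => place_strictMono huv) fun _ _ huv => doubleCone_place_iff huv
  exact .edge (place_pos a) (doubleCone_zero (place_pos a) (place_lt a).le) (hinner.trans hlast)

lemma IsPotentialOn.doubleCone (hα : 0 < α) (hh : IsPotentialOn E α β h univ)
    (hmin : ∀ v, h a ≤ h v) (hmax : ∀ v, h v ≤ h b) :
    IsPotentialOn (doubleCone E) α β (coneExtend h (h a - α) (h b + α))
      (Icc 0 (Fintype.card V + 1 : ℕ)) := by
  constructor
  · intro s hs t ht hst hG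
    rcases eq_zero_or_eq_card_add_one_or_exists_place hs with rfl | rfl | ⟨u, rfl⟩
    · rcases eq_zero_or_eq_card_add_one_or_exists_place ht with rfl | rfl | ⟨v, rfl⟩
      · exact absurd hst (lt_irrefl 0)
      · rw [coneExtend_zero, coneExtend_card_add_one]
        linarith [hmin b]
      · rw [coneExtend_zero, coneExtend_place]
        linarith [hmin v]
    · exact absurd hst ht.2.not_gt
    · rcases eq_zero_or_eq_card_add_one_or_exists_place ht with rfl | rfl | ⟨v, rfl⟩
      · exact absurd hst hs.1.not_gt
      · rw [coneExtend_place, coneExtend_card_add_one]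
        linarith [hmax u]
      · have huv := place_strictMono.lt_iff_lt.1 hst
        simpa only [coneExtend_place] using
          hh.edge u trivial v trivial huv ((doubleCone_place_iff huv).1 hG)
  · intro s hs t ht hst hG
    rcases eq_zero_or_eq_card_add_one_or_exists_place hs with rfl | rfl | ⟨u, rfl⟩
    · exact absurd (doubleCone_zero hst ht.2) hG
    · exact absurd hst ht.2.not_gt
    · rcases eq_zero_or_eq_card_add_one_or_exists_place ht with rfl | rfl | ⟨v, rfl⟩
      · exact absurd hst hs.1.not_gt
      · exact absurd (doubleCone_card_add_one hs.1 hst) hG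
      · have huv := place_strictMono.lt_iff_lt.1 hst
        simpa only [coneExtend_place] using
          hh.nonEdge u trivial v trivial huv (mt (doubleCone_place_iff huv).2 hG)

lemma GReach.transGen {G : ℤ → ℤ → Prop} {s t : ℤ} (hr : GReach G s t) :
    Relation.TransGen (fun i j => i < j ∧ G i j) s t := by
  obtain ⟨ℓ, hℓ, g, rfl, rfl, hg⟩ := hr
  induction ℓ, hℓ using Nat.le_induction with
  | base => exact .single (hg 0 one_pos)
  | succ ℓ _ ih => exact (ih fun m hm => hg m (hm.trans ℓ.lt_succ_self)).tail (hg ℓ ℓ.lt_succ_self)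

lemma transGen_of_gReach_doubleCone (hr : GReach (doubleCone E) (place u) (place v)) :
    Relation.TransGen E u v := by
  have htrans := hr.transGen
  clear hr
  generalize hs : place u = s at htrans
  induction htrans using Relation.TransGen.head_induction_on generalizing u with
  | single hst =>
    subst hs
    exact .single ((doubleCone_place_iff (place_strictMono.lt_iff_lt.1 hst.1)).1 hst.2)
  | @head s c hsc hct ih =>
    subst hs
    have hcv : c < place v := by
      have := Relation.TransGen.mono (fun _ _ h => h.1) _ _ hct
      rwa [Relation.transGen_eq_self] at this
    obtain ⟨w, rfl⟩ := exists_place_eq ((place_pos u).trans hsc.1) (hcv.trans (place_lt v))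
    exact .head ((doubleCone_place_iff (place_strictMono.lt_iff_lt.1 hsc.1)).1 hsc.2) (ih rfl)

lemma exists_path_through_doubleCone (E : V → V → Prop) (v : V) :
    ∃ ℓ : ℕ, 1 ≤ ℓ ∧ ∃ g : ℕ → ℤ, g 0 = 0 ∧ g ℓ = (Fintype.card V + 1 : ℕ) ∧
      (∀ m < ℓ, g m < g (m + 1) ∧ doubleCone E (g m) (g (m + 1))) ∧ ∃ m ≤ ℓ, g m = place v := by
  refine ⟨2, one_le_two, fun | 0 => 0 | 1 => place v | _ => (Fintype.card V + 1 : ℕ),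
    rfl, rfl, fun m hm => ?_, 1, one_le_two, rfl⟩
  interval_cases m
  · exact ⟨place_pos v, doubleCone_zero (place_pos v) (place_lt v).le⟩
  · exact ⟨place_lt v, doubleCone_card_add_one (place_pos v).le (place_lt v)⟩

end DoubleCone

section Sufficiency

theorem critical_of_isPotentialOn {V : Type*} [Finite V] [LinearOrder V] {E : V → V → Prop}
    {α β : ℤ} {h : V → ℤ} {a b : V} (hα : 0 < α) (hh : IsPotentialOn E α β h univ)
    (hmin : ∀ v, h a ≤ h v) (hmax : ∀ v, h v ≤ h b)
    (hlink : ∀ v, ∃ u, u ≠ v ∧ ¬ Relation.TransGen E u v ∧ ¬ Relation.TransGen E v u)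
    {e₁ f₁ e₂ f₂ : ℕ} (p₁ : IncrPath E a b e₁ f₁) (p₂ : IncrPath E a b e₂ f₂)
    (htight₁ : α * e₁ + β * f₁ = h b - h a) (htight₂ : α * e₂ + β * f₂ = h b - h a)
    (hne : f₁ ≠ f₂) : Critical (β / α) := by
  have := Fintype.ofFinite V
  have optimal {e f : ℕ} (p : IncrPath E a b e f) (htight : α * e + β * f = h b - h a) :
      IsOptimal (β / α) (doubleCone E) 0 (Fintype.card V + 1 : ℕ) (e + 2) f := by
    refine (hh.doubleCone hα hmin hmax).isOptimal hα p.doubleCone ?_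
    rw [coneExtend_zero, coneExtend_card_add_one]
    push_cast
    linarith
  refine ⟨Fintype.card V + 1, by omega, doubleCone E, fun i j hG => ⟨hG.1, hG.2.1, hG.2.2.1⟩, ?_,
    exists_maximizers_iff.2 ⟨_, _, _, _, optimal p₁ htight₁, optimal p₂ htight₂, hne⟩⟩
  intro j hj0 hjn
  obtain ⟨v, rfl⟩ := exists_place_eq hj0 hjn
  obtain ⟨u, huv, hu, hv⟩ := hlink v
  refine ⟨exists_path_through_doubleCone E v, place u, place_pos u, place_lt u,
    place_strictMono.injective.ne huv, ?_⟩
  rw [← place_strictMono.monotone.map_min, ← place_strictMono.monotone.map_max]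
  refine mt transGen_of_gReach_doubleCone ?_
  rcases le_total u v with h | h
  · rwa [min_eq_left h, max_eq_right h]
  · rwa [min_eq_right h, max_eq_left h]

lemma exists_not_transGen_of_isolated {V : Type*} [Nontrivial V] {E : V → V → Prop} {w : V}
    (hw : ∀ u, ¬ E w u ∧ ¬ E u w) (v : V) :
    ∃ u, u ≠ v ∧ ¬ Relation.TransGen E u v ∧ ¬ Relation.TransGen E v u := by
  have hout (u : V) : ¬ Relation.TransGen E w u := fun h =>
    have ⟨c, hc, _⟩ := Relation.TransGen.head'_iff.1 h
    (hw c).1 hc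
  have hin (u : V) : ¬ Relation.TransGen E u w := fun h =>
    have ⟨c, _, hc⟩ := Relation.TransGen.tail'_iff.1 h
    (hw c).2 hc
  by_cases hvw : v = w
  · obtain ⟨u, hu⟩ := exists_ne v
    exact ⟨u, hu, hvw ▸ hin u, hvw ▸ hout u⟩
  · exact ⟨w, Ne.symm hvw, hout v, hin v⟩

lemma critical_one_div_natCast {k : ℕ} (hk : 2 ≤ k) : Critical (1 / k) := by
  let E : Fin (k + 1) → Fin (k + 1) → Prop := fun u v => (u : ℕ) = 0 ∧ (v : ℕ) = k
  let h : Fin (k + 1) → ℤ := fun u => (u : ℕ)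
  let vertex : ℕ → Fin (k + 1) := Fin.ofNat (k + 1)
  have val_vertex {i : ℕ} (hi : i ≤ k) : (vertex i : ℕ) = i := Nat.mod_eq_of_lt (by omega)
  have potential : IsPotentialOn E k 1 h univ := by
    constructor <;> simp only [E, h, Fin.lt_def] <;> omega
  have isolated (u : Fin (k + 1)) : ¬ E (vertex 1) u ∧ ¬ E u (vertex 1) := by
    simp only [E, val_vertex (by omega : 1 ≤ k)]
    omega
  have walk : IncrPath E (vertex 0) (vertex k) 0 k := by
    refine IncrPath.of_forall_nonEdge fun i hi => ?_
    simp only [E, Fin.lt_def, val_vertex hi.le, val_vertex (Nat.succ_le_of_lt hi)]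
    omega
  have jump : IncrPath E (vertex 0) (vertex k) 1 0 := by
    refine .edge ?_ ⟨val_vertex k.zero_le, val_vertex le_rfl⟩ (.nil _)
    rw [Fin.lt_def, val_vertex k.zero_le, val_vertex le_rfl]
    omega
  have : Nontrivial (Fin (k + 1)) := Fin.nontrivial_iff_two_le.2 (by omega)
  simpa using critical_of_isPotentialOn (by omega) potential (a := vertex 0) (b := vertex k)
    (by simp only [h, val_vertex k.zero_le]; omega) (by simp only [h, val_vertex le_rfl]; omega)
    (exists_not_transGen_of_isolated isolated) walk jump
    (by simp only [h, val_vertex k.zero_le, val_vertex le_rfl]; omega)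
    (by simp only [h, val_vertex k.zero_le, val_vertex le_rfl]; omega) (by omega)

lemma critical_natCast {k : ℕ} (hk : 2 ≤ k) : Critical k := by
  let E : Fin (k + 2) → Fin (k + 2) → Prop := fun u v =>
    (u : ℕ) < v ∧ (v : ℕ) ≤ k ∧ ¬ ((u : ℕ) = 0 ∧ (v : ℕ) = k)
  let h : Fin (k + 2) → ℤ := fun u => if (u : ℕ) ≤ k then (u : ℕ) else 2 * k
  let vertex : ℕ → Fin (k + 2) := Fin.ofNat (k + 2)
  have val_vertex {i : ℕ} (hi : i ≤ k + 1) : (vertex i : ℕ) = i := Nat.mod_eq_of_lt (by omega)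
  have height_zero : h (vertex 0) = 0 := by simp [h, val_vertex]
  have height_top : h (vertex (k + 1)) = 2 * k := by simp [h, val_vertex]
  have potential : IsPotentialOn E 1 k h univ := by
    constructor <;> simp only [E, h, Fin.lt_def] <;> grind
  have isolated (u : Fin (k + 2)) : ¬ E (vertex (k + 1)) u ∧ ¬ E u (vertex (k + 1)) := by
    simp only [E, val_vertex le_rfl]
    omega
  have walk : IncrPath E (vertex 0) (vertex k) k 0 := by
    refine IncrPath.of_forall_edge fun i hi => ?_
    simp only [E, Fin.lt_def, val_vertex (by omega : i ≤ k + 1),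
      val_vertex (by omega : i + 1 ≤ k + 1)]
    omega
  have jump : IncrPath E (vertex 0) (vertex k) 0 1 := by
    refine .nonEdge ?_ (fun hE => hE.2.2 ⟨val_vertex (Nat.zero_le _), val_vertex k.le_succ⟩)
      (.nil _)
    rw [Fin.lt_def, val_vertex (Nat.zero_le _), val_vertex k.le_succ]
    omega
  have last : IncrPath E (vertex k) (vertex (k + 1)) 0 1 := by
    refine .nonEdge ?_ ?_ (.nil _)
    all_goals
      simp only [E, Fin.lt_def, val_vertex k.le_succ, val_vertex le_rfl]
      omega
  simpa using critical_of_isPotentialOn one_pos potential (a := vertex 0) (b := vertex (k + 1))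
    (by rw [height_zero]; simp only [h]; grind) (by rw [height_top]; simp only [h]; grind)
    (exists_not_transGen_of_isolated isolated) (walk.trans last) (jump.trans last)
    (by rw [height_zero, height_top]; push_cast; ring)
    (by rw [height_zero, height_top]; push_cast; ring) (by omega)

/-- The linear order used for `x = -p / q`: `q + 1` consecutive blocks of `d + p + 1` vertices. -/
abbrev BlockOrder (d p q : ℕ) : Type := Fin (q + 1) ×ₗ Fin (d + p + 1)

namespace BlockOrder

variable {d p q : ℕ}

/-- The vertex number `r` of block number `k`, both counted from `0`; the numbers are reduced modulo
the number of blocks and the number of vertices of a block, respectively. -/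
def vertex (d p q k r : ℕ) : BlockOrder d p q := toLex (Fin.ofNat _ k, Fin.ofNat _ r)

/-- The potential on `BlockOrder d p q`. It rises by `1` from each vertex of a block to the next and
drops by `p` from the last vertex of a block to the first vertex of the following block. -/
def height (u : BlockOrder d p q) : ℤ := d * ((ofLex u).1 : ℕ) + ((ofLex u).2 : ℕ)

/-- The graph on `BlockOrder d p q` whose edges are the pairs along which the height rises by at
least `q`. -/
def graph (u v : BlockOrder d p q) : Prop := height u + q ≤ height v

lemma height_vertex {k r : ℕ} (hk : k ≤ q) (hr : r ≤ d + p) :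
    height (vertex d p q k r) = d * k + r := by
  simp [height, vertex, Nat.mod_eq_of_lt (Nat.lt_succ_of_le hk),
    Nat.mod_eq_of_lt (Nat.lt_succ_of_le hr)]

lemma vertex_lt_vertex {k r k' r' : ℕ} (hk : k ≤ q) (hr : r ≤ d + p) (hk' : k' ≤ q)
    (hr' : r' ≤ d + p) (h : k < k' ∨ k = k' ∧ r < r') : vertex d p q k r < vertex d p q k' r' := by
  simpa [vertex, Prod.Lex.toLex_lt_toLex, Fin.lt_def, Fin.ext_iff,
    Nat.mod_eq_of_lt (Nat.lt_succ_of_le hk), Nat.mod_eq_of_lt (Nat.lt_succ_of_le hr),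
    Nat.mod_eq_of_lt (Nat.lt_succ_of_le hk'), Nat.mod_eq_of_lt (Nat.lt_succ_of_le hr')] using h

lemma exists_eq_vertex (u : BlockOrder d p q) :
    ∃ k ≤ q, ∃ r ≤ d + p, u = vertex d p q k r :=
  ⟨(ofLex u).1, Fin.is_le _, (ofLex u).2, Fin.is_le _, by simp [vertex]⟩

lemma height_nonneg (u : BlockOrder d p q) : 0 ≤ height u := by
  unfold height
  positivity

lemma height_le (u : BlockOrder d p q) : height u ≤ d * q + (d + p) := by
  obtain ⟨k, hk, r, hr, rfl⟩ := exists_eq_vertex u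
  rw [height_vertex hk hr]
  exact_mod_cast add_le_add (Nat.mul_le_mul_left d hk) hr

lemma height_sub_le_of_lt {u v : BlockOrder d p q} (huv : u < v) : height u - p ≤ height v := by
  unfold height
  rcases Prod.Lex.lt_iff.1 huv with hlt | ⟨heq, hlt⟩
  · have hblock : (d : ℤ) * (((ofLex u).1 : ℕ) + 1) ≤ d * ((ofLex v).1 : ℕ) :=
      mul_le_mul_of_nonneg_left (by exact_mod_cast hlt) (by positivity)
    have := (ofLex u).2.is_le
    linarith
  · rw [heq]
    have := Fin.lt_def.1 hlt
    omega

lemma isPotentialOn_height : IsPotentialOn (graph (d := d) (p := p) (q := q)) q (-p) height univ :=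
  ⟨fun _ _ _ _ _ hG => hG, fun _ _ _ _ huv _ => height_sub_le_of_lt huv⟩

lemma height_add_le_of_transGen {u v : BlockOrder d p q} (h : Relation.TransGen graph u v) :
    height u + q ≤ height v := by
  induction h with
  | single h => exact h
  | tail _ h ih =>
    unfold graph at h
    omega

lemma exists_not_transGen (hdp : 0 < d + p) (hq : 2 ≤ q) (v : BlockOrder d p q) :
    ∃ u, u ≠ v ∧ ¬ Relation.TransGen graph u v ∧ ¬ Relation.TransGen graph v u := by
  suffices ∃ u : BlockOrder d p q, height u = height v + 1 ∨ height u = height v - 1 by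
    obtain ⟨u, hu⟩ := this
    refine ⟨u, ?_, fun h => ?_, fun h => ?_⟩
    · rintro rfl
      omega
    all_goals
      have := height_add_le_of_transGen h
      omega
  obtain ⟨k, hk, r, hr, rfl⟩ := exists_eq_vertex v
  rcases hr.lt_or_eq with hlt | rfl
  · refine ⟨vertex d p q k (r + 1), .inl ?_⟩
    rw [height_vertex hk hlt, height_vertex hk hr]
    push_cast
    ring
  · refine ⟨vertex d p q k (d + p - 1), .inr ?_⟩
    rw [height_vertex hk (Nat.sub_le _ _), height_vertex hk le_rfl]
    omega

lemma incrPath_block (hd : d + p = q * (p + 1)) (hq : 0 < q) {k : ℕ} (hk : k ≤ q) :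
    IncrPath graph (vertex d p q k 0) (vertex d p q k (d + p)) (p + 1) 0 := by
  have path : IncrPath graph _ _ (p + 1) 0 :=
    IncrPath.of_forall_edge (g := fun i => vertex d p q k (q * i)) fun i hi => ?_
  · simpa only [mul_zero, hd] using path
  have hi' : q * (i + 1) ≤ d + p := hd ▸ Nat.mul_le_mul_left q hi
  have hlt : q * i < q * (i + 1) := Nat.mul_lt_mul_of_pos_left i.lt_succ_self hq
  refine ⟨vertex_lt_vertex hk (hlt.le.trans hi') hk hi' (.inr ⟨rfl, hlt⟩), ?_⟩
  rw [graph, height_vertex hk (hlt.le.trans hi'), height_vertex hk hi']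
  push_cast
  linarith

lemma incrPath_of_edges (hd : 0 < d) (hq : 0 < q) :
    IncrPath graph (vertex d p q 0 0) (vertex d p q q 0) d 0 := by
  have block_le {t : ℕ} (ht : t ≤ q * d) : t / d ≤ q := Nat.div_le_of_le_mul (by rwa [mul_comm])
  have offset_le (t : ℕ) : t % d ≤ d + p := (t.mod_lt hd).le.trans (Nat.le_add_right d p)
  have height_div_mod {t : ℕ} (ht : t ≤ q * d) : height (vertex d p q (t / d) (t % d)) = t := by
    rw [height_vertex (block_le ht) (offset_le t)]
    exact_mod_cast Nat.div_add_mod t d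
  have path : IncrPath graph _ _ d 0 := IncrPath.of_forall_edge
    (g := fun i => vertex d p q (q * i / d) (q * i % d)) fun i hi => ?_
  · simpa [Nat.mul_div_cancel _ hd] using path
  have hi' : q * (i + 1) ≤ q * d := Nat.mul_le_mul_left q hi
  have hlt : q * i < q * (i + 1) := Nat.mul_lt_mul_of_pos_left i.lt_succ_self hq
  refine ⟨vertex_lt_vertex (block_le (hlt.le.trans hi')) (offset_le _) (block_le hi')
    (offset_le _) ?_, ?_⟩
  · refine (Nat.div_le_div_right hlt.le).lt_or_eq.imp_right fun heq => ⟨heq, ?_⟩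
    have := Nat.div_add_mod (q * i) d
    have := Nat.div_add_mod (q * (i + 1)) d
    rw [heq] at *
    omega
  · rw [graph, height_div_mod (hlt.le.trans hi'), height_div_mod hi']
    push_cast
    linarith

lemma incrPath_of_blocks (hd : d + p = q * (p + 1)) (hq : 0 < q) {k : ℕ} (hk : k ≤ q) :
    IncrPath graph (vertex d p q 0 0) (vertex d p q k 0) ((p + 1) * k) k := by
  induction k with
  | zero => exact .nil _
  | succ k ih =>
    have hk' : k ≤ q := k.le_succ.trans hk
    have drop : IncrPath graph (vertex d p q k (d + p)) (vertex d p q (k + 1) 0) 0 1 := by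
      refine .nonEdge (vertex_lt_vertex hk' le_rfl hk (Nat.zero_le _) (.inl k.lt_succ_self))
        (fun hG => ?_) (.nil _)
      rw [graph, height_vertex hk' le_rfl, height_vertex hk (Nat.zero_le _)] at hG
      push_cast at hG
      linarith
    simpa [mul_add] using (ih hk').trans ((incrPath_block hd hq hk').trans drop)

end BlockOrder

open BlockOrder in
lemma critical_neg_div {p q : ℕ} (hq : 2 ≤ q) : Critical (-p / q) := by
  obtain ⟨d, hd⟩ : ∃ d, q * (p + 1) = d + p :=
    Nat.exists_eq_add_of_le' (by nlinarith : p ≤ q * (p + 1))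
  have hd₀ : 0 < d := by nlinarith
  have hq₀ : 0 < q := by omega
  have bottom : height (vertex d p q 0 0) = 0 := by simp [height_vertex]
  have top : height (vertex d p q q (d + p)) = d * q + (d + p) := by simp [height_vertex]
  have climb := incrPath_block hd.symm hq₀ le_rfl
  have hd' : (q * (p + 1) : ℤ) = d + p := by exact_mod_cast hd
  -- One maximizer climbs by `q` in every step and never drops; the other passes through every
  -- vertex where a block begins or ends, and drops by `p` between blocks.
  simpa using critical_of_isPotentialOn (by omega) isPotentialOn_height
    (fun v => bottom.trans_le (height_nonneg v)) (fun v => (height_le v).trans_eq top.symm)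
    (exists_not_transGen (by omega) hq) ((incrPath_of_edges hd₀ hq₀).trans climb)
    ((incrPath_of_blocks hd.symm hq₀ le_rfl).trans climb)
    (by rw [bottom, top]; push_cast; linear_combination hd')
    (by rw [bottom, top]; push_cast; linear_combination (q + 1) * hd') (by omega)

lemma critical_ratCast_of_nonpos {r : ℚ} (hr : r ≤ 0) : Critical r := by
  obtain ⟨a, ha⟩ := Int.eq_ofNat_of_zero_le (neg_nonneg.2 (Rat.num_nonpos.2 hr))
  have hr' : (r : ℝ) = -((2 * a : ℕ) : ℝ) / ((2 * r.den : ℕ) : ℝ) := by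
    have hnum : (r.num : ℝ) = -a := by exact_mod_cast neg_eq_iff_eq_neg.1 ha
    rw [Rat.cast_def, hnum]
    push_cast
    field_simp
  rw [hr']
  exact critical_neg_div (by have := r.den_pos; omega)

end Sufficiency

/-- A real number `x` is critical if and only if `x` is a rational
number with `x ≤ 0`, or `x = 1/n` for some integer `n ≥ 2`, or `x = n` for some integer
`n ≥ 2`. -/
theorem stmt19 (x : ℝ) :
    Critical x ↔
      ((∃ q : ℚ, q ≤ 0 ∧ x = (q : ℝ)) ∨
       (∃ n : ℕ, 2 ≤ n ∧ x = 1 / (n : ℝ)) ∨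
       (∃ n : ℕ, 2 ≤ n ∧ x = (n : ℝ))) := by
  refine ⟨eq_rat_or_one_div_or_nat_of_critical, ?_⟩
  rintro (⟨q, hq, rfl⟩ | ⟨n, hn, rfl⟩ | ⟨n, hn, rfl⟩)
  · exact critical_ratCast_of_nonpos hq
  · exact critical_one_div_natCast hn
  · exact critical_natCast hn
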